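/- arXiv:quant-ph/0507115 — 2 statements merged into one kernel-verified Lean document; each statement's English description precedes it below -/
import Mathlib

section
/- Fix a real m. For ε > 0 and T ∈ ℝ define the regularized free-particle kernel K_{ε,T} : ℝ × ℝ³ → ℂ by K_{ε,T}(x⁰, x⃗) := (4π(ε − iT))^{−1/2} (4π(ε + iT))^{−3/2} exp( −(x⁰)²/(4(ε − iT)) − |x⃗|²/(4(ε + iT)) − (ε + iT)m² ). Then for every N ≥ 1, all ε₁, …, ε_N > 0, all T₁, …, T_N ∈ ℝ, and all q₀, q_N ∈ ℝ⁴, one has ∫_{(ℝ⁴)^{N−1}} ∏_{j=1}^{N} K_{ε_j, T_j}(q_j − q_{j−1}) dq₁ ⋯ dq_{N−1} = K_{ε₁+⋯+ε_N, T₁+⋯+T_N}(q_N − q₀), the integral over the intermediate points being absolutely convergent. -/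
open MeasureTheory Complex

/-- The chain of spacetime points `q₀, q₁, …, q_N`: the endpoints are fixed and
the intermediate points are the integration variables `z : Fin (N-1) → α`. -/
def chainPoint {α : Type*} (N : ℕ) (q0 qN : α) (z : Fin (N - 1) → α)
    (k : Fin (N + 1)) : α :=
  if _h0 : (k : ℕ) = 0 then q0
  else if _hN : (k : ℕ) = N then qN
  else z ⟨(k : ℕ) - 1, by have := k.isLt; omega⟩

/-- The `ε`-regularized free scalar particle kernel `K_{ε,T}(x⁰, x⃗)` of mass
`m` in Minkowski spacetime with signature `(−,+,+,+)`; powers are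
principal-branch complex powers. -/
noncomputable def Kreg (m ε T : ℝ) (x : ℝ × EuclideanSpace ℝ (Fin 3)) : ℂ :=
  (4 * (Real.pi : ℂ) * ((ε : ℂ) - Complex.I * T)) ^ (-(1 / 2) : ℂ) *
    (4 * (Real.pi : ℂ) * ((ε : ℂ) + Complex.I * T)) ^ (-(3 / 2) : ℂ) *
    Complex.exp (-((x.1 ^ 2 : ℝ) : ℂ) / (4 * ((ε : ℂ) - Complex.I * T)) -
      ((‖x.2‖ ^ 2 : ℝ) : ℂ) / (4 * ((ε : ℂ) + Complex.I * T)) -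
      ((ε : ℂ) + Complex.I * T) * (m : ℂ) ^ 2)

/-!
With `τ = ε + iT`, the kernel factors as `e^{-τm²} H_{τ̄}(x⁰) H_τ(x⃗)`, where
`H_τ(v) = (4πτ)^{-d/2} e^{-|v|²/(4τ)}` is the heat kernel of `ℝᵈ` at complex time `τ`. On the right
half-plane the Gaussian integral gives `H_σ ⋆ H_τ = H_{σ+τ}`; the principal branches match because
arguments in `(-π/2, π/2)` add without wrapping. Products of convolution semigroups, and their
twists by the additive character `e^{-τm²}`, are again convolution semigroups, hence so is the
kernel. A chain of kernels converges absolutely by Tonelli, integrating over the points from the far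
end: the last step is bounded and every other step has finite `L¹` norm. Fubini then removes one
point at a time through the semigroup law.
-/

open scoped ENNReal Convolution

section KernelChain

variable {α M : Type*}

lemma chainPoint_succ_cons (n : ℕ) (x y a : α) (z : Fin n → α) (k : Fin (n + 2)) :
    chainPoint (n + 2) x y (Fin.cons a z : Fin (n + 1) → α) k.succ =
      chainPoint (n + 1) a y z k := by
  refine Fin.cases (by simp [chainPoint]) (fun i => ?_) k
  by_cases hi : (i : ℕ) = n
  · simp [chainPoint, hi]
  · simp [chainPoint, hi, Fin.cons]

lemma measurable_chainPoint [MeasurableSpace α] (N : ℕ) (x y : α) (k : Fin (N + 1)) :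
    Measurable fun z => chainPoint N x y z k := by
  unfold chainPoint
  split_ifs <;> fun_prop

/-- The integrand of the iterated composition of the integral kernels `K 0, …, K n`: the product
of the `K j` along the chain of points from `x` to `y` with intermediate points `z`. -/
def chainProd [CommMonoid M] {n : ℕ} (K : Fin (n + 1) → α → α → M) (x y : α) (z : Fin n → α) : M :=
  ∏ j, K j (chainPoint (n + 1) x y z j.castSucc) (chainPoint (n + 1) x y z j.succ)

lemma chainProd_zero [CommMonoid M] (K : Fin 1 → α → α → M) (x y : α) (z : Fin 0 → α) :
    chainProd K x y z = K 0 x y := by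
  simp [chainProd, chainPoint]

lemma chainProd_cons [CommMonoid M] {n : ℕ} (K : Fin (n + 2) → α → α → M) (x y a : α)
    (z : Fin n → α) :
    chainProd K x y (Fin.cons a z) = K 0 x a * chainProd (fun j => K j.succ) a y z := by
  simp only [chainProd, Fin.prod_univ_succ (n := n + 1), ← Fin.succ_castSucc, chainPoint_succ_cons]
  rfl

lemma measurable_chainProd [MeasurableSpace α] [CommMonoid M] [MeasurableSpace M]
    [MeasurableMul₂ M] {n : ℕ} {K : Fin (n + 1) → α → α → M}
    (hK : ∀ j, Measurable (Function.uncurry (K j))) (x y : α) : Measurable (chainProd K x y) :=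
  Finset.measurable_fun_prod _ fun j _ =>
    (hK j).fun_comp ((measurable_chainPoint (n + 1) x y j.castSucc).prodMk
      (measurable_chainPoint (n + 1) x y j.succ))

end KernelChain

section FinCons

variable {α E : Type*} [MeasurableSpace α] (μ : Measure α) [SigmaFinite μ] {n : ℕ}

lemma measurePreserving_fin_cons :
    MeasurePreserving (fun p : α × (Fin n → α) => (Fin.cons p.1 p.2 : Fin (n + 1) → α))
      (μ.prod (Measure.pi fun _ => μ)) (Measure.pi fun _ => μ) := by
  simpa [MeasurableEquiv.piFinSuccAbove_symm_apply, Fin.insertNthEquiv] using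
    (measurePreserving_piFinSuccAbove (fun _ : Fin (n + 1) => μ) 0).symm

lemma lintegral_fin_cons {f : (Fin (n + 1) → α) → ℝ≥0∞} (hf : Measurable f) :
    ∫⁻ z, f z ∂Measure.pi (fun _ => μ) =
      ∫⁻ a, ∫⁻ z, f (Fin.cons a z) ∂Measure.pi (fun _ => μ) ∂μ := by
  have hcons := measurePreserving_fin_cons μ (n := n)
  rw [← hcons.lintegral_comp hf, lintegral_prod _ (hf.fun_comp hcons.measurable).aemeasurable]

lemma integral_fin_cons [NormedAddCommGroup E] [NormedSpace ℝ E] {f : (Fin (n + 1) → α) → E}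
    (hf : Integrable f (Measure.pi fun _ => μ)) :
    ∫ z, f z ∂Measure.pi (fun _ => μ) =
      ∫ a, ∫ z, f (Fin.cons a z) ∂Measure.pi (fun _ => μ) ∂μ := by
  have hcons := measurePreserving_fin_cons μ (n := n)
  calc ∫ z, f z ∂Measure.pi (fun _ => μ)
      = ∫ p, f (Fin.cons p.1 p.2) ∂μ.prod (Measure.pi fun _ => μ) := by
        rw [← hcons.map_eq,
          integral_map hcons.aemeasurable (hcons.map_eq ▸ hf.aestronglyMeasurable)]
    _ = _ := integral_prod _ (hcons.integrable_comp_of_integrable hf)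

end FinCons

section Composition

variable {α 𝕜 : Type*} [MeasurableSpace α] {μ : Measure α} [SigmaFinite μ] [RCLike 𝕜]

lemma lintegral_chainProd_le {n : ℕ} {K : Fin (n + 1) → α → α → ℝ≥0∞}
    (hK : ∀ j, Measurable (Function.uncurry (K j))) (x y : α) :
    ∫⁻ z, chainProd K x y z ∂Measure.pi (fun _ => μ) ≤
      (∏ j : Fin n, ⨆ a, ∫⁻ b, K j.castSucc a b ∂μ) * ⨆ a, ⨆ b, K (Fin.last n) a b := by
  induction n generalizing x with
  | zero => simpa [chainProd_zero] using le_iSup₂ (f := K 0) x y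
  | succ n ih =>
    rw [lintegral_fin_cons μ (measurable_chainProd hK x y), Fin.prod_univ_succ, mul_assoc]
    set C := (∏ j : Fin n, ⨆ a, ∫⁻ b, K j.succ.castSucc a b ∂μ) *
      ⨆ a, ⨆ b, K (Fin.last (n + 1)) a b
    have hK₀ : Measurable (K 0 x) := (hK 0).comp measurable_prodMk_left
    calc ∫⁻ a, ∫⁻ z, chainProd K x y (Fin.cons a z) ∂Measure.pi (fun _ => μ) ∂μ
        ≤ ∫⁻ a, K 0 x a * C ∂μ := by
          gcongr with a
          simp only [chainProd_cons]
          rw [lintegral_const_mul _ (measurable_chainProd (fun j => hK j.succ) a y)]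
          gcongr
          exact ih (fun j => hK j.succ) a
      _ = (∫⁻ a, K 0 x a ∂μ) * C := lintegral_mul_const _ hK₀
      _ ≤ (⨆ a, ∫⁻ b, K 0 a b ∂μ) * C := by
          gcongr
          exact le_iSup (fun a => ∫⁻ b, K 0 a b ∂μ) x

lemma integrable_chainProd {n : ℕ} {K : Fin (n + 1) → α → α → 𝕜}
    (hK : ∀ j, Measurable (Function.uncurry (K j)))
    (hrow : ∀ j : Fin n, ⨆ a, ∫⁻ b, ‖K j.castSucc a b‖ₑ ∂μ < ∞)
    (hlast : ⨆ a, ⨆ b, ‖K (Fin.last n) a b‖ₑ < ∞) (x y : α) :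
    Integrable (chainProd K x y) (Measure.pi fun _ => μ) := by
  refine ⟨(measurable_chainProd hK x y).aestronglyMeasurable, ?_⟩
  have henorm (z : Fin n → α) : ‖chainProd K x y z‖ₑ = chainProd (fun j a b => ‖K j a b‖ₑ) x y z :=
    map_prod (⟨⟨enorm, by simp⟩, enorm_mul⟩ : 𝕜 →* ℝ≥0∞) _ _
  simp only [HasFiniteIntegral, henorm]
  exact (lintegral_chainProd_le (fun j => (hK j).enorm) x y).trans_lt
    (ENNReal.mul_lt_top (ENNReal.prod_lt_top fun j _ => hrow j) hlast)

lemma integral_chainProd_succ {n : ℕ} {K : Fin (n + 2) → α → α → 𝕜} {x y : α}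
    (hK : Integrable (chainProd K x y) (Measure.pi fun _ => μ)) :
    ∫ z, chainProd K x y z ∂Measure.pi (fun _ => μ) =
      ∫ a, K 0 x a * ∫ z, chainProd (fun j => K j.succ) a y z ∂Measure.pi (fun _ => μ) ∂μ := by
  simp only [integral_fin_cons μ hK, chainProd_cons, integral_const_mul]

end Composition

/-- A convolution semigroup: functions `k s` on an additive group with `k s ⋆ k t = k (s + t)`
for `s` and `t` in an additively closed index set `S`; the values of `k` outside `S` are
unconstrained. Integrability and boundedness make the convolution integrals converge absolutely at
every point, so that the junk value `0` of a divergent integral never enters. -/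
structure IsConvolutionSemigroup {G 𝕜 ι : Type*} [Sub G] [MeasurableSpace G] [RCLike 𝕜] [Add ι]
    (μ : Measure G) (S : Set ι) (k : ι → G → 𝕜) : Prop where
  add_mem : ∀ ⦃s⦄, s ∈ S → ∀ ⦃t⦄, t ∈ S → s + t ∈ S
  measurable : ∀ ⦃s⦄, s ∈ S → Measurable (k s)
  integrable : ∀ ⦃s⦄, s ∈ S → Integrable (k s) μ
  bounded : ∀ ⦃s⦄, s ∈ S → ∃ C, ∀ x, ‖k s x‖ ≤ C
  convolution_eq : ∀ ⦃s⦄, s ∈ S → ∀ ⦃t⦄, t ∈ S →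
    k s ⋆[ContinuousLinearMap.mul 𝕜 𝕜, μ] k t = k (s + t)

namespace IsConvolutionSemigroup

variable {G H 𝕜 ι κ F : Type*} [RCLike 𝕜]

section Chain

variable [AddGroup G] [MeasurableSpace G] [MeasurableAdd G] {μ : Measure G} [μ.IsAddRightInvariant]
  {S : Set ι} {k : ι → G → 𝕜}

lemma integral_mul_sub [Add ι] (hk : IsConvolutionSemigroup μ S k) {s t : ι} (hs : s ∈ S)
    (ht : t ∈ S) (x y : G) : ∫ a, k s (a - x) * k t (y - a) ∂μ = k (s + t) (y - x) := by
  rw [← hk.convolution_eq hs ht, convolution_mul, ← integral_add_right_eq_self _ x]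
  simp only [add_sub_cancel_right, sub_add_eq_sub_sub_swap]

variable [MeasurableSub₂ G] [SigmaFinite μ] [AddCommMonoid ι] {n : ℕ} {s : Fin (n + 1) → ι}

lemma integrable_chainProd (hk : IsConvolutionSemigroup μ S k) (hs : ∀ j, s j ∈ S) (x y : G) :
    Integrable (chainProd (fun j a b => k (s j) (b - a)) x y) (Measure.pi fun _ => μ) := by
  have hmeas (j : Fin (n + 1)) : Measurable (Function.uncurry fun a b => k (s j) (b - a)) :=
    (hk.measurable (hs j)).fun_comp (measurable_snd.sub measurable_fst)
  refine _root_.integrable_chainProd hmeas (fun j => ?_) ?_ x y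
  · refine (iSup_le fun a => ?_).trans_lt (hk.integrable (hs j.castSucc)).hasFiniteIntegral
    exact (lintegral_sub_right_eq_self (fun b => ‖k (s j.castSucc) b‖ₑ) a).le
  · obtain ⟨C, hC⟩ := hk.bounded (hs (Fin.last n))
    refine (iSup₂_le fun a b => ?_).trans_lt (ENNReal.ofReal_lt_top (r := C))
    rw [← ofReal_norm]
    exact ENNReal.ofReal_le_ofReal (hC (b - a))

theorem integral_chainProd (hk : IsConvolutionSemigroup μ S k) (hs : ∀ j, s j ∈ S) (x y : G) :
    ∫ z, chainProd (fun j a b => k (s j) (b - a)) x y z ∂Measure.pi (fun _ => μ) =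
      k (∑ j, s j) (y - x) := by
  induction n generalizing x with
  | zero => simp [chainProd_zero, measureReal_def]
  | succ n ih =>
    have htail : ∑ j : Fin (n + 1), s j.succ ∈ S :=
      Finset.sum_induction_nonempty _ (· ∈ S) (fun _ _ ha hb => hk.add_mem ha hb)
        Finset.univ_nonempty fun j _ => hs j.succ
    rw [integral_chainProd_succ (hk.integrable_chainProd hs x y), Fin.sum_univ_succ,
      ← hk.integral_mul_sub (hs 0) htail]
    simp only [ih fun j => hs j.succ]

end Chain

lemma comap [Sub G] [MeasurableSpace G] [Add ι] [Add κ] {μ : Measure G} {S : Set ι}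
    {k : ι → G → 𝕜} (hk : IsConvolutionSemigroup μ S k) [FunLike F κ ι]
    [AddHomClass F κ ι] (f : F) :
    IsConvolutionSemigroup μ (f ⁻¹' S) (k ∘ f) where
  add_mem s hs t ht := by simpa using hk.add_mem hs ht
  measurable _ hs := hk.measurable hs
  integrable _ hs := hk.integrable hs
  bounded _ hs := hk.bounded hs
  convolution_eq s hs t ht := by simpa using hk.convolution_eq hs ht

lemma smul [Sub G] [MeasurableSpace G] [Add ι] {μ : Measure G} {S : Set ι}
    {k : ι → G → 𝕜} (hk : IsConvolutionSemigroup μ S k) {χ : ι → 𝕜}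
    (hχ : ∀ s t, χ (s + t) = χ s * χ t) :
    IsConvolutionSemigroup μ S fun s => χ s • k s where
  add_mem := hk.add_mem
  measurable s hs := (hk.measurable hs).const_smul (χ s)
  integrable s hs := (hk.integrable hs).smul (χ s)
  bounded s hs := by
    obtain ⟨C, hC⟩ := hk.bounded hs
    refine ⟨‖χ s‖ * C, fun x => ?_⟩
    rw [Pi.smul_apply, norm_smul]
    gcongr
    exact hC x
  convolution_eq s hs t ht := by
    ext x
    simp only [← hk.convolution_eq hs ht, hχ, convolution_mul, Pi.smul_apply, smul_mul_smul_comm,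
      integral_smul]

lemma prod [Sub G] [MeasurableSpace G] [Sub H] [MeasurableSpace H] [Add ι]
    {μ : Measure G} {ν : Measure H} [SFinite μ] [SFinite ν]
    {S : Set ι} {k : ι → G → 𝕜} {l : ι → H → 𝕜} (hk : IsConvolutionSemigroup μ S k)
    (hl : IsConvolutionSemigroup ν S l) :
    IsConvolutionSemigroup (μ.prod ν) S fun s p => k s p.1 * l s p.2 where
  add_mem := hk.add_mem
  measurable s hs :=
    ((hk.measurable hs).comp measurable_fst).mul ((hl.measurable hs).comp measurable_snd)
  integrable s hs := (hk.integrable hs).mul_prod (hl.integrable hs)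
  bounded s hs := by
    obtain ⟨C, hC⟩ := hk.bounded hs
    obtain ⟨D, hD⟩ := hl.bounded hs
    exact ⟨C * D, fun p => norm_mul_le_of_le (hC p.1) (hD p.2)⟩
  convolution_eq s hs t ht := by
    ext p
    rw [← hk.convolution_eq hs ht, ← hl.convolution_eq hs ht]
    simp only [convolution_mul]
    rw [← integral_prod_mul]
    exact integral_congr_ae (.of_forall fun q => mul_mul_mul_comm _ _ _ _)

end IsConvolutionSemigroup

section HeatKernel

lemma inv_re_pos {z : ℂ} (hz : 0 < z.re) : 0 < z⁻¹.re := by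
  rw [inv_re]
  exact div_pos hz (normSq_pos.2 (ne_zero_of_re_pos hz))

lemma mul_cpow_of_re_pos {a b : ℂ} (ha : 0 < a.re) (hb : 0 < b.re) (s : ℂ) :
    (a * b) ^ s = a ^ s * b ^ s := by
  have ha₀ := ne_zero_of_re_pos ha
  have hb₀ := ne_zero_of_re_pos hb
  have harg_a := abs_lt.1 (abs_arg_lt_pi_div_two_iff.2 (.inl ha))
  have harg_b := abs_lt.1 (abs_arg_lt_pi_div_two_iff.2 (.inl hb))
  rw [cpow_def_of_ne_zero (mul_ne_zero ha₀ hb₀), cpow_def_of_ne_zero ha₀, cpow_def_of_ne_zero hb₀,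
    log_mul ha₀ hb₀ ⟨by linarith, by linarith⟩, add_mul, exp_add]

lemma cpow_neg_mul_cpow_neg_mul_cpow {a b : ℂ} (ha : 0 < a.re) (hb : 0 < b.re) (s : ℂ) :
    a ^ (-s) * b ^ (-s) * (a⁻¹ + b⁻¹)⁻¹ ^ s = (a + b) ^ (-s) := by
  have hsum : 0 < (a + b).re := add_pos ha hb
  have hinv : 0 < (a⁻¹ + b⁻¹)⁻¹.re := inv_re_pos (add_pos (inv_re_pos ha) (inv_re_pos hb))
  have hmul : a * b = (a + b) * (a⁻¹ + b⁻¹)⁻¹ := by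
    have ha₀ := ne_zero_of_re_pos ha
    have hb₀ := ne_zero_of_re_pos hb
    have hsum₀ := ne_zero_of_re_pos hsum
    rw [inv_add_inv ha₀ hb₀]
    field_simp
  rw [← mul_cpow_of_re_pos ha hb, hmul, mul_cpow_of_re_pos hsum hinv, mul_assoc, cpow_neg _ s,
    cpow_neg _ s, inv_mul_cancel₀, mul_one]
  simp [cpow_eq_zero_iff, ne_zero_of_re_pos hinv]

variable {V : Type*} [NormedAddCommGroup V] [InnerProductSpace ℝ V]

/-- The fundamental solution of the heat equation on `V` at complex time `τ`, meaningful for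
`0 < τ.re`. -/
noncomputable def complexHeatKernel (τ : ℂ) (v : V) : ℂ :=
  (4 * (Real.pi : ℂ) * τ) ^ (-(Module.finrank ℝ V / 2) : ℂ) *
    exp (-(4 * τ)⁻¹ * (‖v‖ : ℂ) ^ 2)

lemma continuous_complexHeatKernel (τ : ℂ) : Continuous (complexHeatKernel τ : V → ℂ) := by
  unfold complexHeatKernel
  fun_prop

lemma norm_complexHeatKernel_le {τ : ℂ} (hτ : 0 < τ.re) (v : V) :
    ‖complexHeatKernel τ v‖ ≤ ‖(4 * (Real.pi : ℂ) * τ) ^ (-(Module.finrank ℝ V / 2) : ℂ)‖ := by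
  have hinv : 0 < (4 * τ)⁻¹.re := inv_re_pos (by simpa using hτ)
  rw [complexHeatKernel, norm_mul]
  refine mul_le_of_le_one_right (norm_nonneg _) ?_
  rw [norm_exp, Real.exp_le_one_iff, ← ofReal_pow, re_mul_ofReal, neg_re]
  exact mul_nonpos_of_nonpos_of_nonneg (by linarith) (sq_nonneg _)

variable [FiniteDimensional ℝ V] [MeasurableSpace V] [BorelSpace V]

lemma integrable_complexHeatKernel {τ : ℂ} (hτ : 0 < τ.re) :
    Integrable (complexHeatKernel τ : V → ℂ) := by
  have hinv : 0 < (4 * τ)⁻¹.re := inv_re_pos (by simpa using hτ)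
  unfold complexHeatKernel
  simpa using
    (GaussianFourier.integrable_cexp_neg_mul_sq_norm_add hinv 0 (0 : V)).const_mul
      ((4 * (Real.pi : ℂ) * τ) ^ (-(Module.finrank ℝ V / 2) : ℂ))

lemma integral_cexp_neg_mul_sq_norm_mul_cexp_neg_mul_sq_norm_sub {a b : ℂ} (hab : 0 < (a + b).re)
    (w : V) :
    ∫ v : V, exp (-a * (‖v‖ : ℂ) ^ 2) * exp (-b * (‖w - v‖ : ℂ) ^ 2) =
      (Real.pi / (a + b)) ^ (Module.finrank ℝ V / 2 : ℂ) *
        exp (-(a * b / (a + b)) * (‖w‖ : ℂ) ^ 2) := by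
  have hab₀ := ne_zero_of_re_pos hab
  have hexpand (v : V) : exp (-a * (‖v‖ : ℂ) ^ 2) * exp (-b * (‖w - v‖ : ℂ) ^ 2) =
      exp (-b * (‖w‖ : ℂ) ^ 2) *
        exp (-(a + b) * (‖v‖ : ℂ) ^ 2 + (2 * b) * (inner ℝ w v : ℝ)) := by
    have hnorm : (‖w - v‖ : ℂ) ^ 2 = (‖w‖ : ℂ) ^ 2 - 2 * (inner ℝ w v : ℝ) + (‖v‖ : ℂ) ^ 2 :=
      mod_cast norm_sub_sq_real w v
    rw [← exp_add, ← exp_add, hnorm]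
    ring_nf
  simp only [hexpand]
  rw [integral_const_mul, GaussianFourier.integral_cexp_neg_mul_sq_norm_add hab, mul_left_comm,
    ← exp_add]
  congr 2
  field_simp
  ring

lemma complexHeatKernel_convolution {σ τ : ℂ} (hσ : 0 < σ.re) (hτ : 0 < τ.re) :
    complexHeatKernel σ ⋆[ContinuousLinearMap.mul ℂ ℂ] complexHeatKernel τ =
      (complexHeatKernel (σ + τ) : V → ℂ) := by
  have hσ₀ := ne_zero_of_re_pos hσ
  have hτ₀ := ne_zero_of_re_pos hτ
  have hinv : 0 < ((4 * σ)⁻¹ + (4 * τ)⁻¹).re :=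
    add_pos (inv_re_pos (by simpa using hσ)) (inv_re_pos (by simpa using hτ))
  have hscale {z : ℂ} (hz : 0 < z.re) : 0 < (4 * (Real.pi : ℂ) * z).re := by
    simpa [mul_assoc] using mul_pos Real.pi_pos hz
  have hnormalization := cpow_neg_mul_cpow_neg_mul_cpow (hscale hσ) (hscale hτ)
    (Module.finrank ℝ V / 2 : ℂ)
  have hharmonic : ((4 * Real.pi * σ)⁻¹ + (4 * Real.pi * τ)⁻¹ : ℂ)⁻¹ =
      Real.pi / ((4 * σ)⁻¹ + (4 * τ)⁻¹) := by
    field_simp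
  have hexponent : (4 * σ)⁻¹ * (4 * τ)⁻¹ / ((4 * σ)⁻¹ + (4 * τ)⁻¹) = (4 * (σ + τ))⁻¹ := by
    rw [inv_add_inv (by simpa) (by simpa)]
    field_simp
  ext w
  simp only [convolution_mul, complexHeatKernel, mul_mul_mul_comm]
  rw [integral_const_mul, integral_cexp_neg_mul_sq_norm_mul_cexp_neg_mul_sq_norm_sub hinv,
    ← mul_assoc, ← hharmonic, hnormalization, hexponent, ← mul_add]

theorem isConvolutionSemigroup_complexHeatKernel :
    IsConvolutionSemigroup (volume : Measure V) {τ : ℂ | 0 < τ.re} complexHeatKernel where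
  add_mem σ hσ τ hτ := show 0 < (σ + τ).re from add_pos hσ hτ
  measurable τ _ := (continuous_complexHeatKernel τ).measurable
  integrable _ hτ := integrable_complexHeatKernel hτ
  bounded _ hτ := ⟨_, norm_complexHeatKernel_le hτ⟩
  convolution_eq _ hσ _ hτ := complexHeatKernel_convolution hσ hτ

end HeatKernel

lemma Kreg_eq_smul_complexHeatKernel_mul (m : ℝ) (τ : ℂ) :
    Kreg m τ.re τ.im = exp (-τ * m ^ 2) •
      fun x => complexHeatKernel (starRingEnd ℂ τ) x.1 * complexHeatKernel τ x.2 := by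
  ext x
  have hτ : (τ.re : ℂ) + I * τ.im = τ := Complex.ext (by simp) (by simp)
  have hconj : (τ.re : ℂ) - I * τ.im = starRingEnd ℂ τ :=
    Complex.ext (by simp) (by simp)
  have hnorm : (‖x.1‖ : ℂ) ^ 2 = (x.1 ^ 2 : ℝ) := mod_cast sq_abs x.1
  simp only [Kreg, complexHeatKernel, hτ, hconj, hnorm, Module.finrank_self,
    finrank_euclideanSpace_fin, sub_eq_add_neg, exp_add, Pi.smul_apply, smul_eq_mul]
  push_cast
  ring_nf

theorem isConvolutionSemigroup_Kreg (m : ℝ) :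
    IsConvolutionSemigroup ((volume : Measure ℝ).prod (volume : Measure (EuclideanSpace ℝ (Fin 3))))
      {τ : ℂ | 0 < τ.re} fun τ => Kreg m τ.re τ.im := by
  simp only [Kreg_eq_smul_complexHeatKernel_mul]
  refine ((isConvolutionSemigroup_complexHeatKernel.comap (starRingEnd ℂ)).prod
    isConvolutionSemigroup_complexHeatKernel).smul fun σ τ => ?_
  rw [← exp_add, neg_add, add_mul]

/-- **Composition of regularized free-particle kernels** (Theorem "Evaluation
of the Path Integral" in regularized form). Integrating the product of one-step
kernels over all intermediate spacetime points yields the kernel with summed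
regularization and path-parameter intervals. -/
theorem kernel_composition (m : ℝ) (N : ℕ) (hN : 1 ≤ N)
    (ε : Fin N → ℝ) (hε : ∀ j, 0 < ε j) (T : Fin N → ℝ)
    (q0 qN : ℝ × EuclideanSpace ℝ (Fin 3)) :
    Integrable (fun z : Fin (N - 1) → ℝ × EuclideanSpace ℝ (Fin 3) =>
        ∏ j : Fin N,
          Kreg m (ε j) (T j)
            (chainPoint N q0 qN z j.succ - chainPoint N q0 qN z j.castSucc)) ∧
    (∫ z : Fin (N - 1) → ℝ × EuclideanSpace ℝ (Fin 3),
        ∏ j : Fin N,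
          Kreg m (ε j) (T j)
            (chainPoint N q0 qN z j.succ - chainPoint N q0 qN z j.castSucc))
      = Kreg m (∑ j, ε j) (∑ j, T j) (qN - q0) := by
  obtain ⟨n, rfl⟩ := Nat.exists_eq_add_of_le' hN
  let τ (j : Fin (n + 1)) : ℂ := ⟨ε j, T j⟩
  have hτ (j : Fin (n + 1)) : τ j ∈ {τ : ℂ | 0 < τ.re} := hε j
  refine ⟨(isConvolutionSemigroup_Kreg m).integrable_chainProd hτ q0 qN,
    ((isConvolutionSemigroup_Kreg m).integral_chainProd hτ q0 qN).trans ?_⟩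
  simp only [re_sum, im_sum, τ]
end

section
/- Let E > 0, ε > 0, and t ∈ ℝ, and let w denote the principal square root of the complex number E² − iε (so Re w > 0 and Im w < 0). Then the absolutely convergent Lebesgue integral satisfies (−i/(2π)) ∫_ℝ e^{−iωt} / (E² − ω² − iε) dω = e^{−i w |t|} / (2w). -/
open MeasureTheory Complex

/-!
For `Im w < 0` the function `t ↦ exp (-i w |t|)` is integrable, and splitting at `t = 0` shows that
its Fourier transform is `-2 i w / (w² - ω²)`. This is integrable too, because
`w² - ω² = -(ω - w) (ω + w)` and both `(ω - w)⁻¹` and `(ω + w)⁻¹` are square integrable, so Fourier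
inversion applies; no contour is needed. The principal square root maps the lower half-plane into
itself, which places `w = √(E² - i ε)` there.
-/

section TwoSidedExponential

lemma eqOn_cexp_mul_sub_mul_abs_Iic (a b : ℂ) :
    Set.EqOn (fun x : ℝ ↦ cexp ((b + a) * x)) (fun x ↦ cexp (b * x - a * (|x| : ℝ)))
      (Set.Iic 0) := fun x hx ↦ by
  simp only [abs_of_nonpos (Set.mem_Iic.1 hx), ofReal_neg]
  ring_nf

lemma eqOn_cexp_mul_sub_mul_abs_Ioi (a b : ℂ) :
    Set.EqOn (fun x : ℝ ↦ cexp ((b - a) * x)) (fun x ↦ cexp (b * x - a * (|x| : ℝ)))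
      (Set.Ioi 0) := fun x hx ↦ by
  simp only [abs_of_pos (Set.mem_Ioi.1 hx), sub_mul]

variable {a b : ℂ}

lemma integrableOn_cexp_mul_sub_mul_abs_Iic (h : 0 < (b + a).re) :
    IntegrableOn (fun x : ℝ ↦ cexp (b * x - a * (|x| : ℝ))) (Set.Iic 0) :=
  (integrableOn_exp_mul_complex_Iic h 0).congr_fun (eqOn_cexp_mul_sub_mul_abs_Iic a b)
    measurableSet_Iic

lemma integrableOn_cexp_mul_sub_mul_abs_Ioi (h : (b - a).re < 0) :
    IntegrableOn (fun x : ℝ ↦ cexp (b * x - a * (|x| : ℝ))) (Set.Ioi 0) :=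
  (integrableOn_exp_mul_complex_Ioi h 0).congr_fun (eqOn_cexp_mul_sub_mul_abs_Ioi a b)
    measurableSet_Ioi

lemma integrable_cexp_mul_sub_mul_abs (h : |b.re| < a.re) :
    Integrable fun x : ℝ ↦ cexp (b * x - a * (|x| : ℝ)) := by
  obtain ⟨hneg, hpos⟩ := abs_lt.1 h
  rw [← integrableOn_univ, ← Set.Iic_union_Ioi (a := (0 : ℝ)), integrableOn_union]
  exact ⟨integrableOn_cexp_mul_sub_mul_abs_Iic (by rw [add_re]; linarith),
    integrableOn_cexp_mul_sub_mul_abs_Ioi (by rw [sub_re]; linarith)⟩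

theorem integral_cexp_mul_sub_mul_abs (h : |b.re| < a.re) :
    ∫ x : ℝ, cexp (b * x - a * (|x| : ℝ)) = 2 * a / (a ^ 2 - b ^ 2) := by
  obtain ⟨hneg, hpos⟩ := abs_lt.1 h
  have hadd : 0 < (b + a).re := by rw [add_re]; linarith
  have hsub : (b - a).re < 0 := by rw [sub_re]; linarith
  have hadd₀ : b + a ≠ 0 := ne_zero_of_re_pos hadd
  have hsub₀ : b - a ≠ 0 := fun h₀ ↦ by simp [h₀] at hsub
  calc ∫ x : ℝ, cexp (b * x - a * (|x| : ℝ))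
      = (∫ x : ℝ in Set.Iic 0, cexp ((b + a) * x)) + ∫ x : ℝ in Set.Ioi 0, cexp ((b - a) * x) := by
        rw [setIntegral_congr_fun measurableSet_Iic (eqOn_cexp_mul_sub_mul_abs_Iic a b),
          setIntegral_congr_fun measurableSet_Ioi (eqOn_cexp_mul_sub_mul_abs_Ioi a b),
          intervalIntegral.integral_Iic_add_Ioi (integrableOn_cexp_mul_sub_mul_abs_Iic hadd)
            (integrableOn_cexp_mul_sub_mul_abs_Ioi hsub)]
    _ = 1 / (b + a) + -1 / (b - a) := by
        rw [integral_exp_mul_complex_Iic hadd, integral_exp_mul_complex_Ioi hsub]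
        simp only [ofReal_zero, mul_zero, Complex.exp_zero]
    _ = 2 * a / (a ^ 2 - b ^ 2) := by
        rw [show a ^ 2 - b ^ 2 = -((b + a) * (b - a)) by ring]
        field_simp
        ring

end TwoSidedExponential

section AngularFourier

open scoped FourierTransform

variable {F : Type*} [NormedAddCommGroup F] [NormedSpace ℂ F]

/-- The Fourier transform from time to angular frequency, in the physicists' convention: the kernel
is `exp (i ω t)`, and the factor `1 / (2 π)` is left to the inverse transform. -/
noncomputable def angularFourier (f : ℝ → F) (ω : ℝ) : F :=
  ∫ t : ℝ, cexp (I * ω * t) • f t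

lemma fourier_eq_angularFourier (f : ℝ → F) (ξ : ℝ) :
    𝓕 f ξ = angularFourier f (-(2 * Real.pi) * ξ) := by
  rw [Real.fourier_real_eq_integral_exp_smul, angularFourier]
  congr! 4 with t
  push_cast
  ring

theorem integral_cexp_smul_angularFourier [CompleteSpace F] {f : ℝ → F} {t : ℝ}
    (hf : Integrable f) (hF : Integrable (angularFourier f)) (ht : ContinuousAt f t) :
    ∫ ω : ℝ, cexp (-I * ω * t) • angularFourier f ω = (2 * Real.pi) • f t := by
  have hscale₀ : -(2 * Real.pi) ≠ 0 := neg_ne_zero.2 Real.two_pi_pos.ne'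
  have hfourier : 𝓕 f = fun ξ ↦ angularFourier f (-(2 * Real.pi) * ξ) :=
    funext (fourier_eq_angularFourier f)
  have hfourier_int : Integrable (𝓕 f) := hfourier ▸ hF.comp_mul_left' hscale₀
  calc ∫ ω : ℝ, cexp (-I * ω * t) • angularFourier f ω
      = (2 * Real.pi) • ∫ ξ : ℝ, cexp (-I * (-(2 * Real.pi) * ξ : ℝ) * t) •
          angularFourier f (-(2 * Real.pi) * ξ) := by
        rw [Measure.integral_comp_mul_left (fun ω : ℝ ↦ cexp (-I * ω * t) • angularFourier f ω),
          abs_inv, abs_neg, abs_of_pos Real.two_pi_pos, smul_inv_smul₀ Real.two_pi_pos.ne']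
    _ = (2 * Real.pi) • 𝓕⁻ (𝓕 f) t := by
        rw [Real.fourierInv_eq', hfourier]
        congr! 5 with ξ
        simp only [RCLike.inner_apply, conj_trivial]
        push_cast
        ring
    _ = (2 * Real.pi) • f t := by rw [hf.fourierInv_fourier_eq hfourier_int ht]

end AngularFourier

section SquareIntegrability

lemma integrable_inv_sq_add_sq {c : ℝ} (hc : c ≠ 0) :
    Integrable fun x : ℝ ↦ (x ^ 2 + c ^ 2)⁻¹ := by
  refine ((integrable_inv_one_add_sq.comp_div hc).const_mul (c ^ 2)⁻¹).congr
    (.of_forall fun x ↦ ?_)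
  simp only [← mul_inv]
  congr 1
  field_simp
  ring

lemma memLp_two_inv_sub {z : ℂ} (hz : z.im ≠ 0) :
    MemLp (fun x : ℝ ↦ ((x : ℂ) - z)⁻¹) 2 := by
  rw [memLp_two_iff_integrable_sq_norm (Measurable.aestronglyMeasurable (by fun_prop))]
  refine ((integrable_inv_sq_add_sq hz).comp_sub_right z.re).congr (.of_forall fun x ↦ ?_)
  simp only [norm_inv, inv_pow, ← normSq_eq_norm_sq, normSq_apply, sub_re, sub_im, ofReal_re,
    ofReal_im]
  ring_nf

lemma integrable_inv_sq_sub_sq {w : ℂ} (hw : w.im ≠ 0) :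
    Integrable fun x : ℝ ↦ (w ^ 2 - (x : ℂ) ^ 2)⁻¹ := by
  have hneg : (-w).im ≠ 0 := by simpa
  refine ((memLp_two_inv_sub hw).integrable_mul (memLp_two_inv_sub hneg)).neg.congr
    (.of_forall fun x ↦ ?_)
  simp only [Pi.neg_apply, Pi.mul_apply]
  rw [← mul_inv, ← inv_neg]
  ring_nf

end SquareIntegrability

section LowerHalfPlane

variable {w : ℂ}

theorem angularFourier_cexp_neg_I_mul_abs (hw : w.im < 0) :
    angularFourier (fun t : ℝ ↦ cexp (-I * w * (|t| : ℝ))) =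
      fun ω : ℝ ↦ -2 * I * w * (w ^ 2 - (ω : ℂ) ^ 2)⁻¹ := by
  ext ω
  calc angularFourier (fun t : ℝ ↦ cexp (-I * w * (|t| : ℝ))) ω
      = ∫ t : ℝ, cexp (I * ω * t - I * w * (|t| : ℝ)) := by
        simp only [angularFourier, smul_eq_mul, ← Complex.exp_add, neg_mul, sub_eq_add_neg]
    _ = 2 * (I * w) / ((I * w) ^ 2 - (I * ω) ^ 2) := integral_cexp_mul_sub_mul_abs (by simpa)
    _ = -2 * I * w * (w ^ 2 - (ω : ℂ) ^ 2)⁻¹ := by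
        rw [show (I * w) ^ 2 - (I * ω) ^ 2 = -(w ^ 2 - (ω : ℂ) ^ 2) by
          linear_combination (w ^ 2 - (ω : ℂ) ^ 2) * I_sq, div_neg]
        ring

lemma im_cpow_half_neg {z : ℂ} (hz : z.im < 0) : (z ^ (1 / 2 : ℂ)).im < 0 := by
  have hre : z.re < ‖z‖ := (le_abs_self _).trans_lt (abs_re_lt_norm.2 hz.ne)
  rw [one_div, cpow_inv_two_im_eq_neg_sqrt hz, neg_lt_zero]
  exact Real.sqrt_pos.2 (by linarith)

theorem propagator_frequency_integral_general (hw : w.im < 0) (t : ℝ) :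
    (-I / (2 * (Real.pi : ℂ))) * ∫ ω : ℝ, cexp (-I * ω * t) / (w ^ 2 - (ω : ℂ) ^ 2) =
      cexp (-I * w * (|t| : ℝ)) / (2 * w) := by
  have hw₀ : w ≠ 0 := by rintro rfl; simp at hw
  have hpi : (Real.pi : ℂ) ≠ 0 := ofReal_ne_zero.2 Real.pi_ne_zero
  have hf : Integrable fun t : ℝ ↦ cexp (-I * w * (|t| : ℝ)) := by
    simpa using integrable_cexp_mul_sub_mul_abs (a := I * w) (b := 0) (by simpa)
  have hF := angularFourier_cexp_neg_I_mul_abs hw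
  have hF_int : Integrable (angularFourier fun t : ℝ ↦ cexp (-I * w * (|t| : ℝ))) :=
    hF ▸ (integrable_inv_sq_sub_sq hw.ne).const_mul _
  have hinversion : -2 * I * w * ∫ ω : ℝ, cexp (-I * ω * t) / (w ^ 2 - (ω : ℂ) ^ 2) =
      2 * Real.pi * cexp (-I * w * (|t| : ℝ)) := by
    have h := integral_cexp_smul_angularFourier (t := t) hf hF_int (by fun_prop)
    simp only [hF, smul_eq_mul, mul_left_comm _ (-2 * I * w), integral_const_mul] at h
    simpa only [div_eq_mul_inv, real_smul, ofReal_mul, ofReal_ofNat] using h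
  rw [div_mul_eq_mul_div, div_eq_div_iff (by simp [hpi]) (by simp [hw₀])]
  linear_combination hinversion

end LowerHalfPlane

/-- **Frequency integral of the regularized Feynman propagator** (exact form).
For `E > 0`, `ε > 0`, `t ∈ ℝ`, with `w` the principal square root of
`E² − iε`, one has
`(−i/(2π)) ∫_ℝ e^{−iωt}/(E² − ω² − iε) dω = e^{−iw|t|}/(2w)`. -/
theorem propagator_frequency_integral (E ε t : ℝ) (hE : 0 < E) (hε : 0 < ε)
    (w : ℂ) (hw : w = ((E : ℂ) ^ 2 - (ε : ℂ) * Complex.I) ^ ((1 / 2 : ℂ))) :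
    (-Complex.I / (2 * (Real.pi : ℂ))) *
        ∫ ω : ℝ, Complex.exp (-Complex.I * (ω : ℂ) * (t : ℂ)) /
          ((E : ℂ) ^ 2 - (ω : ℂ) ^ 2 - (ε : ℂ) * Complex.I)
      = Complex.exp (-Complex.I * w * (|t| : ℝ)) / (2 * w) := by
  subst hw
  simpa only [one_div, cpow_ofNat_inv_pow, sub_right_comm] using
    propagator_frequency_integral_general (im_cpow_half_neg (by simpa [sq] using hε)) t
end
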